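/- Let $H$ be a real Hilbert space, let $\Gamma=[a,b]$ with $0<a\le b$ be a nonempty compact interval, let $\mu,\rho>0$, and let $A_1,A_2:H\rightrightarrows H$ be maximally monotone and paramonotone operators. Here a monotone operator $A$ is paramonotone if $u\in Ax$, $v\in Ay$ and $\langle x-y,u-v\rangle=0$ imply $v\in Ax$ and $u\in Ay$. For $\sigma>0$, an operator $A$ is $\sigma$-strongly monotone relative to a set $X$ if $X$ is nonempty, closed, convex and contained in $\operatorname{dom}A=\{x: Ax\ne\varnothing\}$ and, with $P_X$ the metric projection onto $X$, $$\langle v-u,\,y-P_X(y)\rangle\ \ge\ \sigma\|y-P_X(y)\|^2\qquad\text{for all } y\in H,\ v\in Ay,\ u\in A(P_X(y)).$$ Put $$\mathcal P:=\operatorname{zer}(A_1+A_2)=\{x: 0\in A_1x+A_2x\},\qquad \mathcal D:=\operatorname{zer}\bigl(A_1^{-1}-A_2^{-1}\circ(-\mathrm{Id})\bigr)=\{y: 0\in A_1^{-1}y-A_2^{-1}(-y)\}.$$ Suppose that $A_1$ or $A_2$ is $\mu$-strongly monotone relative to $\mathcal P$, and that $A_1^{-1}$ is $\rho$-strongly monotone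 relative to $\mathcal D$ or $A_2^{-1}$ is $\rho$-strongly monotone relative to $-\mathcal D$. Write $J_{\gamma A}:=(\mathrm{Id}+\gamma A)^{-1}$ for the resolvent, which is single-valued with full domain when $A$ is maximally monotone and $\gamma>0$. Then for every $\gamma\in\Gamma$ the Douglas–Rachford operator $$T_\gamma:=\mathrm{Id}-J_{\gamma A_1}+J_{\gamma A_2}\circ(2J_{\gamma A_1}-\mathrm{Id})$$ is linearly regular with constant $\kappa_\gamma=4\bigl(1+\max\{\tfrac1{\gamma\mu},\tfrac{\gamma}{\rho}\}\bigr)$, i.e. the set $\operatorname{Fix}T_\gamma=\{x: T_\gamma x=x\}$ is nonempty and $\operatorname{dist}(x,\operatorname{Fix}T_\gamma)\le\kappa_\gamma\|x-T_\gamma x\|$ for all $x\in H$. Consequently, the family $(T_\gamma)_{\gamma\in\Gamma}$ is uniformly linearly regular: there exists $\kappa>0$ with $\operatorname{dist}(x,\operatorname{Fix}T_\gamma)\le\kappa\|x-T_\gamma x\|$ for all $x\in H$ and all $\gamma\in\Gamma$. -/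

import Mathlib

open scoped Pointwise RealInnerProductSpace

section Operators

variable {H : Type*} [NormedAddCommGroup H] [InnerProductSpace ℝ H]

/-- The graph of a set-valued operator. -/
def SVGraph (A : H → Set H) : Set (H × H) := {p | p.2 ∈ A p.1}

/-- The domain of a set-valued operator. -/
def SVDom (A : H → Set H) : Set H := {x | (A x).Nonempty}

/-- The zeros of a set-valued operator. -/
def SVZer (A : H → Set H) : Set H := {x | (0 : H) ∈ A x}

/-- The inverse of a set-valued operator. -/
def SVInv (A : H → Set H) : H → Set H := fun u => {x | u ∈ A x}

/-- A set-valued operator is monotone. -/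
def SVMonotone (A : H → Set H) : Prop :=
  ∀ ⦃x y u v : H⦄, u ∈ A x → v ∈ A y → 0 ≤ ⟪x - y, u - v⟫

/-- A set-valued operator is maximally monotone. -/
def MaxMonotone (A : H → Set H) : Prop :=
  SVMonotone A ∧
    ∀ B : H → Set H, SVMonotone B → SVGraph A ⊆ SVGraph B → SVGraph B = SVGraph A

/-- A set-valued operator is paramonotone. -/
def Paramonotone (A : H → Set H) : Prop :=
  SVMonotone A ∧
    ∀ ⦃x y u v : H⦄, u ∈ A x → v ∈ A y → ⟪x - y, u - v⟫ = 0 → v ∈ A x ∧ u ∈ A y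

/-- `p` is a metric projection of `y` onto the set `X`. If `X` is nonempty, closed and convex and
`H` is complete, then there is exactly one such `p` for every `y`. -/
def IsMetricProj (X : Set H) (y p : H) : Prop :=
  p ∈ X ∧ dist y p = Metric.infDist y X

/-- `A` is `μ`-strongly monotone relative to the nonempty closed convex set `X ⊆ dom A`. -/
structure RelStrongMono (A : H → Set H) (μ : ℝ) (X : Set H) : Prop where
  nonempty : X.Nonempty
  isClosed : IsClosed X
  convex : Convex ℝ X
  subset_dom : X ⊆ SVDom A
  le_inner : ∀ ⦃y v p u : H⦄, v ∈ A y → IsMetricProj X y p → u ∈ A p →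
    μ * ‖y - p‖ ^ 2 ≤ ⟪v - u, y - p⟫

/-- The set-valued resolvent `(Id + A)⁻¹`. -/
def SVResolvent (A : H → Set H) : H → Set H := SVInv fun p => {p} + A p

/-- The resolvent `J_A = (Id + A)⁻¹` as a single-valued map. For maximally monotone `A` the set
`SVResolvent A x` is always a singleton (`MaxMonotone.svResolvent_eq` below), and `resolventMap A x`
is its element. -/
noncomputable def resolventMap (A : H → Set H) (x : H) : H :=
  Classical.epsilon fun p => p ∈ SVResolvent A x

/-- The Douglas–Rachford operator `Id - J_{γA₁} + J_{γA₂} ∘ (2 J_{γA₁} - Id)`. -/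
noncomputable def douglasRachford (A₁ A₂ : H → Set H) (γ : ℝ) (x : H) : H :=
  x - resolventMap (fun z => γ • A₁ z) x +
    resolventMap (fun z => γ • A₂ z) ((2 : ℝ) • resolventMap (fun z => γ • A₁ z) x - x)

/-- `T` is linearly regular with constant `κ`. The fixed point set is required to be nonempty,
because `Metric.infDist` to the empty set is `0` rather than `+∞`. -/
def LinearlyRegular (T : H → H) (κ : ℝ) : Prop :=
  (Function.fixedPoints T).Nonempty ∧
    ∀ x : H, Metric.infDist x (Function.fixedPoints T) ≤ κ * ‖x - T x‖

/-- The family `(T γ)`, `γ ∈ Γ`, is uniformly linearly regular. -/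
def UniformlyLinearlyRegular (Γ : Set ℝ) (T : ℝ → H → H) : Prop :=
  ∃ κ : ℝ, 0 < κ ∧ ∀ γ ∈ Γ, LinearlyRegular (T γ) κ

theorem mem_svResolvent {A : H → Set H} {x p : H} : p ∈ SVResolvent A x ↔ x - p ∈ A p := by
  simp only [SVResolvent, SVInv, Set.mem_ofPred_eq, Set.singleton_add, Set.mem_image]
  constructor
  · rintro ⟨u, hu, rfl⟩
    simpa using hu
  · intro h
    exact ⟨_, h, by abel⟩

/-- Finitely many balls with centres `c i` and radii `‖m i‖` have a common point if the centres are
no farther apart than the points `m i`. -/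
theorem exists_common_point {ι : Type*} [Fintype ι] [Nonempty ι] (c m : ι → H)
    (h : ∀ i j, ‖c i - c j‖ ^ 2 ≤ ‖m i - m j‖ ^ 2) : ∃ p : H, ∀ i, ‖p - c i‖ ≤ ‖m i‖ := by
  classical
  set g : (ι → ℝ) → ℝ := fun l =>
    ∑ i, l i * (‖c i‖ ^ 2 - ‖m i‖ ^ 2) - ‖∑ i, l i • c i‖ ^ 2 with hg
  have hgc : Continuous g := by fun_prop
  obtain ⟨l, hl, hmax⟩ := (isCompact_stdSimplex ℝ ι).exists_isMaxOn
    ⟨_, single_mem_stdSimplex ℝ (Classical.arbitrary ι)⟩ hgc.continuousOn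
  have key : ∀ d : ι → H, ∑ i, ∑ j, l i * l j * ‖d i - d j‖ ^ 2 =
      2 * (∑ i, l i * ‖d i‖ ^ 2) - 2 * ‖∑ i, l i • d i‖ ^ 2 := by
    intro d
    have e1 : ‖∑ i, l i • d i‖ ^ 2 = ∑ i, ∑ j, l i * l j * ⟪d i, d j⟫ := by
      rw [← real_inner_self_eq_norm_sq, sum_inner]
      refine Finset.sum_congr rfl fun i _ => ?_
      rw [inner_sum]
      refine Finset.sum_congr rfl fun j _ => ?_
      rw [real_inner_smul_left, real_inner_smul_right]; ring
    have e2 : ∀ i j, l i * l j * ‖d i - d j‖ ^ 2 =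
        l i * ‖d i‖ ^ 2 * l j + l i * (l j * ‖d j‖ ^ 2) - 2 * (l i * l j * ⟪d i, d j⟫) := by
      intro i j; rw [norm_sub_sq_real]; ring
    have e3 : ∑ i, ∑ j, l i * ‖d i‖ ^ 2 * l j = ∑ i, l i * ‖d i‖ ^ 2 := by
      simp_rw [← Finset.mul_sum, hl.2, mul_one]
    have e4 : ∑ i, ∑ j, l i * (l j * ‖d j‖ ^ 2) = ∑ i, l i * ‖d i‖ ^ 2 := by
      simp_rw [← Finset.mul_sum]
      rw [← Finset.sum_mul, hl.2, one_mul]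
    have e5 : ∑ i, ∑ j, 2 * (l i * l j * ⟪d i, d j⟫) = 2 * ‖∑ i, l i • d i‖ ^ 2 := by
      rw [e1]
      simp_rw [Finset.mul_sum]
    simp_rw [e2, Finset.sum_sub_distrib, Finset.sum_add_distrib]
    rw [e3, e4, e5]
    ring
  have hle : g l ≤ 0 := by
    have h1 := key c
    have h2 := key m
    have h3 : ∑ i, ∑ j, l i * l j * ‖c i - c j‖ ^ 2 ≤ ∑ i, ∑ j, l i * l j * ‖m i - m j‖ ^ 2 :=
      Finset.sum_le_sum fun i _ => Finset.sum_le_sum fun j _ =>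
        mul_le_mul_of_nonneg_left (h i j) (mul_nonneg (hl.1 i) (hl.1 j))
    have h4 : g l = ∑ i, l i * ‖c i‖ ^ 2 - ∑ i, l i * ‖m i‖ ^ 2 - ‖∑ i, l i • c i‖ ^ 2 := by
      simp [hg, mul_sub, Finset.sum_sub_distrib]
    nlinarith [sq_nonneg ‖∑ i, l i • m i‖]
  refine ⟨∑ i, l i • c i, fun j => ?_⟩
  set p := ∑ i, l i • c i with hp
  set a := ‖c j‖ ^ 2 - ‖m j‖ ^ 2 with ha
  set s := ∑ i, l i * (‖c i‖ ^ 2 - ‖m i‖ ^ 2) with hs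
  have hgl : g l = s - ‖p‖ ^ 2 := rfl
  have hstep : ∀ t : ℝ, 0 < t → t ≤ 1 → a - s - 2 * ⟪p, c j - p⟫ ≤ t * ‖c j - p‖ ^ 2 := by
    intro t ht ht1
    have hmem : (1 - t) • l + t • (Pi.single j 1 : ι → ℝ) ∈ stdSimplex ℝ ι :=
      convex_stdSimplex ℝ ι hl (single_mem_stdSimplex ℝ j) (by linarith) ht.le (by ring)
    have h5 : g ((1 - t) • l + t • (Pi.single j 1 : ι → ℝ)) ≤ g l := hmax hmem
    have h6 : ∑ i, ((1 - t) • l + t • (Pi.single j 1 : ι → ℝ)) i * (‖c i‖ ^ 2 - ‖m i‖ ^ 2) =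
        (1 - t) * s + t * a := by
      simp only [Pi.add_apply, Pi.smul_apply, smul_eq_mul, add_mul, Finset.sum_add_distrib,
        mul_assoc, ← Finset.mul_sum, ← hs]
      simp [Pi.single_apply, ha]
    have h7 : ∑ i, ((1 - t) • l + t • (Pi.single j 1 : ι → ℝ)) i • c i = p + t • (c j - p) := by
      simp only [Pi.add_apply, Pi.smul_apply, smul_eq_mul, add_smul, Finset.sum_add_distrib,
        mul_smul, ← Finset.smul_sum, ← hp]
      simp [Pi.single_apply, smul_sub, sub_smul]
      abel
    have h8 : g ((1 - t) • l + t • (Pi.single j 1 : ι → ℝ)) =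
        (1 - t) * s + t * a - ‖p + t • (c j - p)‖ ^ 2 := by
      simp only [hg, h6, h7]
    rw [h8, hgl, norm_add_sq_real, real_inner_smul_right, norm_smul, mul_pow, Real.norm_eq_abs,
      sq_abs] at h5
    have h9 : t * (a - s - 2 * ⟪p, c j - p⟫) ≤ t * (t * ‖c j - p‖ ^ 2) := by nlinarith
    exact le_of_mul_le_mul_left h9 ht
  have hlim : a - s - 2 * ⟪p, c j - p⟫ ≤ 0 := by
    by_contra! hpos
    set e := a - s - 2 * ⟪p, c j - p⟫ with he
    have hN : 0 ≤ ‖c j - p‖ ^ 2 := sq_nonneg _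
    set N := ‖c j - p‖ ^ 2
    have h10 := hstep (min 1 (e / (2 * (N + 1)))) (by positivity) (min_le_left _ _)
    have h11 : min 1 (e / (2 * (N + 1))) * N ≤ e / (2 * (N + 1)) * N :=
      mul_le_mul_of_nonneg_right (min_le_right _ _) hN
    have h12 : e / (2 * (N + 1)) * N < e := by
      rw [div_mul_eq_mul_div, div_lt_iff₀ (by positivity)]
      nlinarith
    linarith
  have hfin : ‖p - c j‖ ^ 2 ≤ ‖m j‖ ^ 2 := by
    rw [norm_sub_sq_real]
    rw [inner_sub_right, real_inner_self_eq_norm_sq] at hlim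
    rw [hgl] at hle
    simp only [ha] at hlim
    linarith
  exact le_of_sq_le_sq hfin (norm_nonneg _)

/-- The resolvent of a maximally monotone operator is single-valued with full domain. -/
theorem MaxMonotone.existsUnique_svResolvent [CompleteSpace H] {A : H → Set H}
    (hA : MaxMonotone A) (x : H) : ∃! p, p ∈ SVResolvent A x := by
  classical
  simp only [mem_svResolvent]
  refine existsUnique_of_exists_of_unique ?_ ?_
  swap
  · intro p q hp hq
    have h := hA.1 hp hq
    have h1 : x - p - (x - q) = -(p - q) := by abel
    rw [h1, inner_neg_right, real_inner_self_eq_norm_sq] at h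
    have h2 : ‖p - q‖ = 0 := by nlinarith [norm_nonneg (p - q)]
    exact sub_eq_zero.1 (norm_eq_zero.1 h2)
  -- it suffices to find a point that is monotonically related to the whole graph
  suffices hp : ∃ p : H, ∀ y v, v ∈ A y → 0 ≤ ⟪p - y, x - p - v⟫ by
    obtain ⟨p, hp⟩ := hp
    have h := hA.2 (fun y => {v | v ∈ A y ∨ (y = p ∧ v = x - p)}) ?_ (fun z hz => Or.inl hz)
    · have h1 : (p, x - p) ∈ SVGraph A := by
        rw [← h]; exact Or.inr ⟨rfl, rfl⟩
      exact ⟨p, h1⟩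
    · rintro y z u v (hu | ⟨rfl, rfl⟩) (hv | ⟨rfl, rfl⟩)
      · exact hA.1 hu hv
      · rw [← neg_sub z y, ← neg_sub _ u, inner_neg_neg]
        exact hp _ _ hu
      · exact hp _ _ hv
      · simp
  let c : SVGraph A → H := fun i => (2⁻¹ : ℝ) • (i.1.1 + x - i.1.2)
  let m : SVGraph A → H := fun i => (2⁻¹ : ℝ) • (i.1.1 - x + i.1.2)
  have hcm : ∀ i j : SVGraph A, ‖c i - c j‖ ^ 2 ≤ ‖m i - m j‖ ^ 2 := by
    intro i j
    have h := hA.1 i.2 j.2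
    have e1 : c i - c j = (2⁻¹ : ℝ) • ((i.1.1 - j.1.1) - (i.1.2 - j.1.2)) := by
      simp only [c]; module
    have e2 : m i - m j = (2⁻¹ : ℝ) • ((i.1.1 - j.1.1) + (i.1.2 - j.1.2)) := by
      simp only [m]; module
    rw [e1, e2, norm_smul, norm_smul, mul_pow, mul_pow, norm_sub_sq_real, norm_add_sq_real]
    norm_num
    linarith
  have hball : ∀ (i : SVGraph A) (p : H), ‖p - c i‖ ≤ ‖m i‖ → 0 ≤ ⟪p - i.1.1, x - p - i.1.2⟫ := by
    intro i p h
    have e1 : p - i.1.1 = (p - c i) - m i := by simp only [c, m]; module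
    have e2 : x - p - i.1.2 = -((p - c i) + m i) := by simp only [c, m]; module
    rw [e1, e2, inner_neg_right, inner_sub_left, inner_add_right, inner_add_right,
      real_inner_self_eq_norm_sq, real_inner_self_eq_norm_sq, real_inner_comm (p - c i) (m i)]
    have := pow_le_pow_left₀ (norm_nonneg _) h 2
    linarith
  obtain ⟨i₀⟩ : Nonempty (SVGraph A) := by
    by_contra hne
    have hemp : ∀ y v, v ∉ A y := fun y v hv => hne ⟨⟨(y, v), hv⟩⟩
    have h := hA.2 (fun y => {v | y = 0 ∧ v = 0}) ?_ (fun z hz => (hemp _ _ hz).elim)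
    · have h1 : ((0 : H), (0 : H)) ∈ SVGraph A := by rw [← h]; exact ⟨rfl, rfl⟩
      exact hemp _ _ h1
    · rintro y z u v ⟨rfl, rfl⟩ ⟨rfl, rfl⟩
      simp
  let φ := InnerProductSpace.toDual ℝ H
  let t : SVGraph A → Set (WeakDual ℝ H) := fun i =>
    WeakDual.toStrongDual ⁻¹' Metric.closedBall (φ (c i)) ‖m i‖
  obtain ⟨f, -, hf⟩ := (WeakDual.isCompact_closedBall (φ (c i₀)) ‖m i₀‖).inter_iInter_nonempty t
    (fun i => WeakDual.isClosed_closedBall _ _) (by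
      intro u
      have : Nonempty ↥(insert i₀ u) := ⟨⟨i₀, Finset.mem_insert_self _ _⟩⟩
      obtain ⟨p, hp⟩ := exists_common_point (ι := ↥(insert i₀ u)) (fun i => c i) (fun i => m i)
        (fun i j => hcm i j)
      have hmem : ∀ i ∈ insert i₀ u, StrongDual.toWeakDual (φ p) ∈ t i := by
        intro i hi
        have h1 := hp ⟨i, hi⟩
        change φ p ∈ Metric.closedBall (φ (c i)) ‖m i‖
        rw [Metric.mem_closedBall, LinearIsometryEquiv.dist_map, dist_eq_norm]
        exact h1
      refine ⟨StrongDual.toWeakDual (φ p), hmem i₀ (Finset.mem_insert_self _ _), ?_⟩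
      simp only [Set.mem_iInter]
      exact fun i hi => hmem i (Finset.mem_insert_of_mem hi))
  refine ⟨φ.symm (WeakDual.toStrongDual f), fun y v hv => hball ⟨(y, v), hv⟩ _ ?_⟩
  have h1 := Set.mem_iInter.1 hf ⟨(y, v), hv⟩
  have h2 : WeakDual.toStrongDual f ∈ Metric.closedBall (φ (c ⟨(y, v), hv⟩)) ‖m ⟨(y, v), hv⟩‖ := h1
  rw [← φ.apply_symm_apply (WeakDual.toStrongDual f), Metric.mem_closedBall,
    LinearIsometryEquiv.dist_map, dist_eq_norm] at h2
  exact h2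

/-- For maximally monotone `A`, `resolventMap A` is the set-valued resolvent `(Id + A)⁻¹`. -/
theorem MaxMonotone.svResolvent_eq [CompleteSpace H] {A : H → Set H}
    (hA : MaxMonotone A) (x : H) : SVResolvent A x = {resolventMap A x} := by
  have h := hA.existsUnique_svResolvent x
  have h1 : resolventMap A x ∈ SVResolvent A x := Classical.epsilon_spec h.exists
  ext p
  rw [Set.mem_singleton_iff]
  exact ⟨fun hp => h.unique hp h1, fun hp => hp ▸ h1⟩

end Operators

/-!
Write `z = p + γ u` with `p = J_{γA₁} z` and `u ∈ A₁ p`. The second resolvent produces `q` and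
`-v ∈ A₂ q` with `γ (u - v) = p - q = z - T z =: r`. By paramonotonicity every primal solution `x`
and every dual solution `y` satisfy `y ∈ A₁ x` and `-y ∈ A₂ x`, so that `x + γ y` is a fixed point
and both terms of the gap `S = ⟪p - x, u - y⟫ - ⟪q - x, v - y⟫` are monotonicity products.
Choosing `x` and `y` as projections, relative strong monotonicity bounds `‖p - x‖ ^ 2` or
`‖q - x‖ ^ 2`, and `‖u - y‖ ^ 2` or `‖v - y‖ ^ 2`, by multiples of `S`. On the other hand,
`γ S = ⟪r, z - (x + γ y)⟫ - ‖r‖ ^ 2`, so `‖z - (x + γ y)‖ ^ 2` grows at most like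
`‖r‖ * ‖z - (x + γ y)‖`, which gives the linear bound.
-/

section Resolvent

variable {H : Type*} [NormedAddCommGroup H] [InnerProductSpace ℝ H] {A : H → Set H} {γ : ℝ}

theorem SVMonotone.smul (hA : SVMonotone A) (hγ : 0 ≤ γ) : SVMonotone fun x => γ • A x := by
  rintro x y _ _ ⟨u, hu, rfl⟩ ⟨v, hv, rfl⟩
  change 0 ≤ ⟪x - y, γ • u - γ • v⟫
  rw [← smul_sub, real_inner_smul_right]
  exact mul_nonneg hγ (hA hu hv)

theorem MaxMonotone.smul (hA : MaxMonotone A) (hγ : 0 < γ) : MaxMonotone fun x => γ • A x := by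
  refine ⟨hA.1.smul hγ.le, fun B hB hAB => (hAB.antisymm ?_).symm⟩
  have hA_sub : SVGraph A ⊆ SVGraph fun x => γ⁻¹ • B x := fun ⟨x, u⟩ hu =>
    (Set.mem_inv_smul_set_iff₀ hγ.ne' (B x) u).2 <|
      @hAB (x, γ • u) (Set.smul_mem_smul_set hu)
  have hA_eq := hA.2 _ (hB.smul (inv_nonneg.2 hγ.le)) hA_sub
  rintro ⟨x, u⟩ hu
  have hmem : (x, γ⁻¹ • u) ∈ SVGraph A := hA_eq ▸ Set.smul_mem_smul_set hu
  exact (Set.mem_smul_set_iff_inv_smul_mem₀ hγ.ne' _ _).2 hmem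

variable [CompleteSpace H]

theorem MaxMonotone.sub_resolventMap_mem (hA : MaxMonotone A) (x : H) :
    x - resolventMap A x ∈ A (resolventMap A x) := by
  rw [← mem_svResolvent, hA.svResolvent_eq]
  exact Set.mem_singleton _

theorem MaxMonotone.resolventMap_add (hA : MaxMonotone A) {x u : H} (hu : u ∈ A x) :
    resolventMap A (x + u) = x := by
  have hx : x ∈ SVResolvent A (x + u) := mem_svResolvent.2 (by rwa [add_sub_cancel_left])
  rw [hA.svResolvent_eq] at hx
  exact (Set.mem_singleton_iff.1 hx).symm

end Resolvent

section MetricProj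

variable {H : Type*} [NormedAddCommGroup H] {X : Set H} {y p : H}

theorem IsMetricProj.neg (h : IsMetricProj X y p) : IsMetricProj (-X) (-y) (-p) := by
  refine ⟨Set.neg_mem_neg.2 h.1, ?_⟩
  rw [dist_neg_neg, h.2, ← Set.image_neg_eq_neg]
  exact (Metric.infDist_image (IsometryEquiv.neg H).isometry).symm

theorem exists_isMetricProj [InnerProductSpace ℝ H] [CompleteSpace H] (hne : X.Nonempty)
    (hclosed : IsClosed X) (hconvex : Convex ℝ X) (y : H) : ∃ p, IsMetricProj X y p := by
  obtain ⟨p, hp, hdist⟩ :=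
    exists_norm_eq_iInf_of_complete_convex hne hclosed.isComplete hconvex y
  refine ⟨p, hp, ?_⟩
  simp_rw [Metric.infDist_eq_iInf, dist_eq_norm]
  exact hdist

end MetricProj

section Reflection

variable {H : Type*} [NormedAddCommGroup H] {A : H → Set H}

/-- The reflection `(-Id) ∘ A ∘ (-Id)` of a set-valued operator. It occurs in Attouch–Théra
duality: the dual of the pair `(A₁, A₂)` is `(A₁⁻¹, (-Id) ∘ A₂⁻¹ ∘ (-Id))`. -/
def svReflect (A : H → Set H) : H → Set H := fun x => -A (-x)

variable [InnerProductSpace ℝ H]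

theorem SVMonotone.svInv (hA : SVMonotone A) : SVMonotone (SVInv A) := fun u v x y hx hy => by
  rw [real_inner_comm]
  exact hA hx hy

theorem SVMonotone.svReflect (hA : SVMonotone A) : SVMonotone (svReflect A) :=
  fun x y u v hu hv => by
    have h := hA hu hv
    rwa [neg_sub_neg, neg_sub_neg, ← neg_sub x y, ← neg_sub u v, inner_neg_neg] at h

theorem RelStrongMono.svReflect {μ : ℝ} {X : Set H} (hA : RelStrongMono A μ X) :
    RelStrongMono (svReflect A) μ (-X) where
  nonempty := hA.nonempty.neg
  isClosed := hA.isClosed.neg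
  convex := hA.convex.neg
  subset_dom _ hx := (hA.subset_dom hx).neg
  le_inner y v p u hv hp hu := by
    have hp' : IsMetricProj X (-y) (-p) := neg_neg X ▸ hp.neg
    have h := hA.le_inner hv hp' hu
    rwa [neg_sub_neg, neg_sub_neg, ← neg_sub y p, ← neg_sub v u, inner_neg_neg, norm_neg] at h

end Reflection

section KuhnTucker

variable {H : Type*} [NormedAddCommGroup H] {A₁ A₂ : H → Set H} {P D : Set H}

/-- The Kuhn–Tucker set (also called extended solution set) of the inclusion `0 ∈ A₁ x + A₂ x`:
the pairs of a primal solution `x` and a dual solution `y` with `y ∈ A₁ x` and `-y ∈ A₂ x`. -/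
def kuhnTuckerSet (A₁ A₂ : H → Set H) : Set (H × H) := {z | z.2 ∈ A₁ z.1 ∧ -z.2 ∈ A₂ z.1}

theorem prod_subset_kuhnTuckerSet_dual (hPD : P ×ˢ D ⊆ kuhnTuckerSet A₁ A₂) :
    D ×ˢ P ⊆ kuhnTuckerSet (SVInv A₁) (svReflect (SVInv A₂)) := by
  rintro ⟨y, x⟩ ⟨hy, hx⟩
  obtain ⟨hA₁, hA₂⟩ := hPD (Set.mk_mem_prod hx hy)
  exact ⟨hA₁, Set.neg_mem_neg.2 hA₂⟩

variable [InnerProductSpace ℝ H]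

theorem Paramonotone.zer_prod_zer_subset_kuhnTuckerSet (h₁ : Paramonotone A₁)
    (h₂ : Paramonotone A₂) :
    (SVZer fun x => A₁ x + A₂ x) ×ˢ (SVZer fun y => SVInv A₁ y - SVInv A₂ (-y)) ⊆
      kuhnTuckerSet A₁ A₂ := by
  rintro ⟨x, y⟩ ⟨⟨u, hu, w, hw, huw⟩, ⟨x', hx'₁, x'', hx'₂, hx'⟩⟩
  obtain rfl : w = -u := (neg_eq_of_add_eq_zero_right huw).symm
  obtain rfl : x' = x'' := sub_eq_zero.1 hx'
  have hneg : ⟪x - x', -u - -y⟫ = -⟪x - x', u - y⟫ := by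
    rw [neg_sub_neg, ← neg_sub u y, inner_neg_right]
  have hzero : ⟪x - x', u - y⟫ = 0 :=
    le_antisymm (neg_nonneg.1 (hneg ▸ h₂.1 hw hx'₂)) (h₁.1 hu hx'₁)
  exact ⟨(h₁.2 hu hx'₁ hzero).1, (h₂.2 hw hx'₂ (by rw [hneg, hzero, neg_zero])).1⟩

variable [CompleteSpace H] {μ ρ : ℝ} {p q u v : H}

theorem exists_primal_forall_mul_norm_sq_le_gap (h₁ : SVMonotone A₁) (h₂ : SVMonotone A₂)
    (hPD : P ×ˢ D ⊆ kuhnTuckerSet A₁ A₂) (hP : RelStrongMono A₁ μ P ∨ RelStrongMono A₂ μ P)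
    (hu : u ∈ A₁ p) (hv : -v ∈ A₂ q) :
    ∃ x ∈ P, ∀ y ∈ D, μ * ‖p - x‖ ^ 2 ≤ ⟪p - x, u - y⟫ - ⟪q - x, v - y⟫ ∨
      μ * ‖q - x‖ ^ 2 ≤ ⟪p - x, u - y⟫ - ⟪q - x, v - y⟫ := by
  have hneg (x y : H) : ⟪q - x, -v - -y⟫ = -⟪q - x, v - y⟫ := by
    rw [neg_sub_neg, ← neg_sub v y, inner_neg_right]
  rcases hP with hP | hP
  · obtain ⟨x, hx⟩ := exists_isMetricProj hP.nonempty hP.isClosed hP.convex p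
    refine ⟨x, hx.1, fun y hy => Or.inl ?_⟩
    obtain ⟨hy₁, hy₂⟩ := hPD (Set.mk_mem_prod hx.1 hy)
    have hstrong := hP.le_inner hu hx hy₁
    have hmono := h₂ hv hy₂
    rw [real_inner_comm] at hstrong
    rw [hneg] at hmono
    linarith
  · obtain ⟨x, hx⟩ := exists_isMetricProj hP.nonempty hP.isClosed hP.convex q
    refine ⟨x, hx.1, fun y hy => Or.inr ?_⟩
    obtain ⟨hy₁, hy₂⟩ := hPD (Set.mk_mem_prod hx.1 hy)
    have hstrong := hP.le_inner hv hx hy₂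
    have hmono := h₁ hu hy₁
    rw [real_inner_comm, hneg] at hstrong
    linarith

theorem exists_dual_forall_mul_norm_sq_le_gap (h₁ : SVMonotone A₁) (h₂ : SVMonotone A₂)
    (hPD : P ×ˢ D ⊆ kuhnTuckerSet A₁ A₂)
    (hD : RelStrongMono (SVInv A₁) ρ D ∨ RelStrongMono (SVInv A₂) ρ (-D))
    (hu : u ∈ A₁ p) (hv : -v ∈ A₂ q) :
    ∃ y ∈ D, ∀ x ∈ P, ρ * ‖u - y‖ ^ 2 ≤ ⟪p - x, u - y⟫ - ⟪q - x, v - y⟫ ∨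
      ρ * ‖v - y‖ ^ 2 ≤ ⟪p - x, u - y⟫ - ⟪q - x, v - y⟫ := by
  have hD' : RelStrongMono (SVInv A₁) ρ D ∨ RelStrongMono (svReflect (SVInv A₂)) ρ D :=
    hD.imp_right fun h => neg_neg D ▸ h.svReflect
  obtain ⟨y, hy, hgap⟩ := exists_primal_forall_mul_norm_sq_le_gap h₁.svInv h₂.svInv.svReflect
    (prod_subset_kuhnTuckerSet_dual hPD) hD' (p := u) (q := v) hu (Set.neg_mem_neg.2 hv)
  refine ⟨y, hy, fun x hx => ?_⟩
  rw [real_inner_comm (u - y), real_inner_comm (v - y)]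
  exact hgap x hx

end KuhnTucker

section GapEstimate

theorem le_of_le_two_mul_add_two_mul_sqrt {c r N : ℝ} (hc : 0 ≤ c) (hr : 0 ≤ r)
    (h : N ≤ 2 * r + 2 * √(c * (r * N - r ^ 2))) : N ≤ 4 * (1 + c) * r := by
  by_contra! hN
  have hcr : 0 ≤ c * r := mul_nonneg hc hr
  have hsqrt : √(c * (r * N - r ^ 2)) ≤ c * r + (N - r) / 4 :=
    Real.sqrt_le_iff.2 ⟨by linarith, by linarith [four_mul_le_sq_add (c * r) ((N - r) / 4)]⟩
  linarith

variable {H : Type*} [NormedAddCommGroup H] {a b r : H} {c s : ℝ}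

theorem norm_le_norm_add_sqrt (h : ‖a‖ ^ 2 ≤ s ∨ ‖a - r‖ ^ 2 ≤ s) : ‖a‖ ≤ ‖r‖ + √s := by
  rcases h with h | h
  · exact (Real.le_sqrt_of_sq_le h).trans (le_add_of_nonneg_left (norm_nonneg r))
  · exact (norm_le_norm_add_norm_sub' a r).trans (by gcongr; exact Real.le_sqrt_of_sq_le h)

variable [InnerProductSpace ℝ H]

theorem inner_sub_inner_sub_sub (a b r : H) :
    ⟪a, b⟫ - ⟪a - r, b - r⟫ = ⟪r, a + b⟫ - ‖r‖ ^ 2 := by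
  rw [inner_sub_left, inner_sub_right, inner_sub_right, inner_add_right,
    real_inner_self_eq_norm_sq, real_inner_comm r a]
  ring

theorem norm_add_le_of_norm_sq_le_gap (hc : 0 ≤ c)
    (ha : ‖a‖ ^ 2 ≤ c * (⟪a, b⟫ - ⟪a - r, b - r⟫) ∨
      ‖a - r‖ ^ 2 ≤ c * (⟪a, b⟫ - ⟪a - r, b - r⟫))
    (hb : ‖b‖ ^ 2 ≤ c * (⟪a, b⟫ - ⟪a - r, b - r⟫) ∨
      ‖b - r‖ ^ 2 ≤ c * (⟪a, b⟫ - ⟪a - r, b - r⟫)) :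
    ‖a + b‖ ≤ 4 * (1 + c) * ‖r‖ := by
  refine le_of_le_two_mul_add_two_mul_sqrt hc (norm_nonneg r) ?_
  have hgap : c * (⟪a, b⟫ - ⟪a - r, b - r⟫) ≤ c * (‖r‖ * ‖a + b‖ - ‖r‖ ^ 2) := by
    rw [inner_sub_inner_sub_sub]
    gcongr
    exact real_inner_le_norm r (a + b)
  have hsqrt := Real.sqrt_le_sqrt hgap
  linarith [norm_add_le a b, norm_le_norm_add_sqrt ha, norm_le_norm_add_sqrt hb]

end GapEstimate

section DouglasRachford

variable {H : Type*} [NormedAddCommGroup H]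

theorem LinearlyRegular.mono {T : H → H} {κ κ' : ℝ} (hT : LinearlyRegular T κ) (h : κ ≤ κ') :
    LinearlyRegular T κ' :=
  ⟨hT.1, fun x => (hT.2 x).trans (by gcongr)⟩

variable [InnerProductSpace ℝ H] [CompleteSpace H] {A₁ A₂ : H → Set H} {P D : Set H} {μ ρ γ : ℝ}

theorem add_smul_mem_fixedPoints_douglasRachford (h₁ : MaxMonotone A₁) (h₂ : MaxMonotone A₂)
    (hγ : 0 < γ) {x y : H} (hxy : (x, y) ∈ kuhnTuckerSet A₁ A₂) :
    x + γ • y ∈ Function.fixedPoints (douglasRachford A₁ A₂ γ) := by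
  have hreflect : (2 : ℝ) • x - (x + γ • y) = x + γ • -y := by module
  rw [Function.mem_fixedPoints, Function.IsFixedPt, douglasRachford,
    (h₁.smul hγ).resolventMap_add (Set.smul_mem_smul_set hxy.1), hreflect,
    (h₂.smul hγ).resolventMap_add (Set.smul_mem_smul_set hxy.2)]
  abel

theorem exists_douglasRachford_decomposition (h₁ : MaxMonotone A₁) (h₂ : MaxMonotone A₂)
    (hγ : 0 < γ) (z : H) :
    ∃ p q u v, u ∈ A₁ p ∧ -v ∈ A₂ q ∧ p + γ • u = z ∧ γ • (u - v) = p - q ∧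
      z - douglasRachford A₁ A₂ γ z = p - q := by
  obtain ⟨u, hu, hpu : γ • u = z - _⟩ := (h₁.smul hγ).sub_resolventMap_mem z
  obtain ⟨w, hw, hqw : γ • w = _ - _⟩ := (h₂.smul hγ).sub_resolventMap_mem
    ((2 : ℝ) • resolventMap (fun z => γ • A₁ z) z - z)
  refine ⟨_, _, u, -w, hu, (neg_neg w).symm ▸ hw, ?_, ?_, ?_⟩
  · rw [hpu, add_sub_cancel]
  · rw [sub_neg_eq_add, smul_add, hpu, hqw]
    module
  · rw [douglasRachford]
    abel

theorem exists_norm_sub_add_smul_le (h₁ : SVMonotone A₁) (h₂ : SVMonotone A₂) (hμ : 0 < μ)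
    (hρ : 0 < ρ) (hγ : 0 < γ) (hPD : P ×ˢ D ⊆ kuhnTuckerSet A₁ A₂)
    (hP : RelStrongMono A₁ μ P ∨ RelStrongMono A₂ μ P)
    (hD : RelStrongMono (SVInv A₁) ρ D ∨ RelStrongMono (SVInv A₂) ρ (-D))
    {p q u v : H} (hu : u ∈ A₁ p) (hv : -v ∈ A₂ q) (huv : γ • (u - v) = p - q) :
    ∃ x ∈ P, ∃ y ∈ D, ‖p + γ • u - (x + γ • y)‖ ≤
      4 * (1 + max (1 / (γ * μ)) (γ / ρ)) * ‖p - q‖ := by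
  obtain ⟨x, hx, hprimal⟩ := exists_primal_forall_mul_norm_sq_le_gap h₁ h₂ hPD hP hu hv
  obtain ⟨y, hy, hdual⟩ := exists_dual_forall_mul_norm_sq_le_gap h₁ h₂ hPD hD hu hv
  refine ⟨x, hx, y, hy, ?_⟩
  specialize hprimal y hy
  specialize hdual x hx
  set S := ⟪p - x, u - y⟫ - ⟪q - x, v - y⟫
  set c := max (1 / (γ * μ)) (γ / ρ)
  have hq : p - x - (p - q) = q - x := by abel
  have hv_eq : γ • (u - y) - (p - q) = γ • (v - y) := by rw [← huv]; module
  have hgap : ⟪p - x, γ • (u - y)⟫ - ⟪p - x - (p - q), γ • (u - y) - (p - q)⟫ = γ * S := by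
    rw [hq, hv_eq, real_inner_smul_right, real_inner_smul_right, ← mul_sub]
  have hprimal_scaled (e : H) (he : μ * ‖e‖ ^ 2 ≤ S) : ‖e‖ ^ 2 ≤ c * (γ * S) := by
    have : 0 ≤ S := le_trans (by positivity) he
    calc ‖e‖ ^ 2 = 1 / (γ * μ) * (γ * (μ * ‖e‖ ^ 2)) := by field_simp
      _ ≤ c * (γ * S) := by gcongr; exact le_max_left _ _
  have hdual_scaled (e : H) (he : ρ * ‖e‖ ^ 2 ≤ S) : ‖γ • e‖ ^ 2 ≤ c * (γ * S) := by
    have : 0 ≤ S := le_trans (by positivity) he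
    calc ‖γ • e‖ ^ 2 = γ / ρ * (γ * (ρ * ‖e‖ ^ 2)) := by
          rw [norm_smul, Real.norm_of_nonneg hγ.le]
          field_simp
      _ ≤ c * (γ * S) := by gcongr; exact le_max_right _ _
  have hsplit : p + γ • u - (x + γ • y) = (p - x) + γ • (u - y) := by module
  rw [hsplit]
  apply norm_add_le_of_norm_sq_le_gap (by positivity)
  · rw [hgap, hq]
    exact hprimal.imp (hprimal_scaled _) (hprimal_scaled _)
  · rw [hgap, hv_eq]
    exact hdual.imp (hdual_scaled _) (hdual_scaled _)

theorem linearlyRegular_douglasRachford (h₁ : MaxMonotone A₁) (h₂ : MaxMonotone A₂) (hμ : 0 < μ)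
    (hρ : 0 < ρ) (hγ : 0 < γ) (hPD : P ×ˢ D ⊆ kuhnTuckerSet A₁ A₂)
    (hP : RelStrongMono A₁ μ P ∨ RelStrongMono A₂ μ P)
    (hD : RelStrongMono (SVInv A₁) ρ D ∨ RelStrongMono (SVInv A₂) ρ (-D)) :
    LinearlyRegular (douglasRachford A₁ A₂ γ) (4 * (1 + max (1 / (γ * μ)) (γ / ρ))) := by
  have hnear (z : H) : ∃ f ∈ Function.fixedPoints (douglasRachford A₁ A₂ γ),
      dist z f ≤ 4 * (1 + max (1 / (γ * μ)) (γ / ρ)) * ‖z - douglasRachford A₁ A₂ γ z‖ := by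
    obtain ⟨p, q, u, v, hu, hv, rfl, huv, hT⟩ := exists_douglasRachford_decomposition h₁ h₂ hγ z
    obtain ⟨x, hx, y, hy, hxy⟩ :=
      exists_norm_sub_add_smul_le h₁.1 h₂.1 hμ hρ hγ hPD hP hD hu hv huv
    refine ⟨x + γ • y, add_smul_mem_fixedPoints_douglasRachford h₁ h₂ hγ
      (hPD (Set.mk_mem_prod hx hy)), ?_⟩
    rwa [dist_eq_norm, hT]
  refine ⟨(hnear 0).imp fun _ hf => hf.1, fun z => ?_⟩
  obtain ⟨f, hf, hzf⟩ := hnear z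
  exact (Metric.infDist_le_dist_of_mem hf).trans hzf

theorem stmt11_general {a b : ℝ} (ha : 0 < a) (h₁ : MaxMonotone A₁) (h₂ : MaxMonotone A₂)
    (hμ : 0 < μ) (hρ : 0 < ρ) (hPD : P ×ˢ D ⊆ kuhnTuckerSet A₁ A₂)
    (hP : RelStrongMono A₁ μ P ∨ RelStrongMono A₂ μ P)
    (hD : RelStrongMono (SVInv A₁) ρ D ∨ RelStrongMono (SVInv A₂) ρ (-D)) :
    (∀ γ ∈ Set.Icc a b,
      LinearlyRegular (douglasRachford A₁ A₂ γ) (4 * (1 + max (1 / (γ * μ)) (γ / ρ)))) ∧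
    UniformlyLinearlyRegular (Set.Icc a b) (douglasRachford A₁ A₂) := by
  have hreg : ∀ γ ∈ Set.Icc a b,
      LinearlyRegular (douglasRachford A₁ A₂ γ) (4 * (1 + max (1 / (γ * μ)) (γ / ρ))) :=
    fun γ hγ => linearlyRegular_douglasRachford h₁ h₂ hμ hρ (ha.trans_le hγ.1) hPD hP hD
  refine ⟨hreg, 4 * (1 + max (1 / (a * μ)) (b / ρ)), by positivity, fun γ hγ =>
    (hreg γ hγ).mono ?_⟩
  gcongr
  exacts [hγ.1, hγ.2]

end DouglasRachford

theorem stmt11 {H : Type*} [NormedAddCommGroup H] [InnerProductSpace ℝ H] [CompleteSpace H]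
    (a b : ℝ) (ha : 0 < a) (hab : a ≤ b)
    (A₁ A₂ : H → Set H) (h₁ : MaxMonotone A₁) (h₂ : MaxMonotone A₂)
    (hp₁ : Paramonotone A₁) (hp₂ : Paramonotone A₂)
    (μ ρ : ℝ) (hμ : 0 < μ) (hρ : 0 < ρ)
    (P D : Set H)
    (hP : P = SVZer fun x => A₁ x + A₂ x)
    (hD : D = SVZer fun y => SVInv A₁ y - SVInv A₂ (-y))
    (hprimal : RelStrongMono A₁ μ P ∨ RelStrongMono A₂ μ P)
    (hdual : RelStrongMono (SVInv A₁) ρ D ∨ RelStrongMono (SVInv A₂) ρ (-D)) :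
    (∀ γ ∈ Set.Icc a b,
      LinearlyRegular (douglasRachford A₁ A₂ γ) (4 * (1 + max (1 / (γ * μ)) (γ / ρ)))) ∧
    UniformlyLinearlyRegular (Set.Icc a b) (douglasRachford A₁ A₂) := by
  subst hP hD
  exact stmt11_general ha h₁ h₂ hμ hρ (hp₁.zer_prod_zer_subset_kuhnTuckerSet hp₂) hprimal hdual
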